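/- Let 1 ≤ k ≤ L be integers, λ > 0, and g ∈ Ū. For each K ∈ ℕ let s^K be the solution of the truncated system on coordinates 1,…,K with s^K_{K+1}(t) = 0 for all t, initial values s^K_j(0) = g_j for j = 1,…,K, and values ordered as in Ū. Then for each fixed j ≥ 1 and t ≥ 0, the sequence K ↦ s^K_j(t) is nondecreasing in K (for K ≥ j), and its limit u_j(t) = lim_{K→∞} s^K_j(t) defines the unique Ū-valued solution u of the mean-field ODE system with initial condition g. -/

import Mathlib

open Finset Set Filter

/-- The polynomial `f ≡ f^{(L,k)}` from the paper. -/
noncomputable def fLk (L k : ℕ) (x : ℝ) : ℝ :=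
  ∑ i ∈ Finset.Icc 1 k,
    (L.choose (L - k + i) : ℝ) * ((L - k + i - 2).choose (i - 1) : ℝ) *
      (-1 : ℝ) ^ (i - 1) * x ^ (L - k + i)

/-- Membership in `Ū`: real sequences with `1 = u_0 ≥ u_1 ≥ … ≥ 0`. -/
def InUbar (u : ℕ → ℝ) : Prop :=
  u 0 = 1 ∧ (∀ j, u (j + 1) ≤ u j) ∧ (∀ j, 0 ≤ u j)

/-- A solution of the truncated system on coordinates `1,…,K` with boundary value `c`. -/
def IsTruncSol (L k : ℕ) (lam : ℝ) (K : ℕ) (c : ℝ) (s : ℝ → ℕ → ℝ) : Prop :=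
  (∀ t ∈ Set.Ici (0 : ℝ), s t 0 = 1) ∧
  (∀ t ∈ Set.Ici (0 : ℝ), s t (K + 1) = c) ∧
  (∀ j, 1 ≤ j → j ≤ K → ∀ t ∈ Set.Ici (0 : ℝ),
    HasDerivWithinAt (fun τ => s τ j)
      (lam * (fLk L k (s t (j - 1)) - fLk L k (s t j)) - k * (s t j - s t (j + 1)))
      (Set.Ici (0 : ℝ)) t)

/-- A `Ū`-valued solution of the mean-field ODE system with initial condition `g`. -/
def IsMFSol (L k : ℕ) (lam : ℝ) (g : ℕ → ℝ) (u : ℝ → ℕ → ℝ) : Prop :=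
  (∀ j, u 0 j = g j) ∧
  (∀ t ∈ Set.Ici (0 : ℝ), InUbar (u t)) ∧
  (∀ j, 1 ≤ j → ∀ t ∈ Set.Ici (0 : ℝ),
    HasDerivWithinAt (fun τ => u τ j)
      (lam * (fLk L k (u t (j - 1)) - fLk L k (u t j)) - k * (u t j - u t (j + 1)))
      (Set.Ici (0 : ℝ)) t)

/-! For `k < L` one has `f''(x) = c * x ^ (L - k - 1) * (1 - x) ^ (k - 1)` with `c > 0`, and
`f'(0) = 0`; for `k = L`, `f(x) = k * x`. So `f` is nondecreasing on `[0, 1]`, and each `u_j'`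
increases with `u_{j-1}` and `u_{j+1}`. Extended by zero, a truncated solution solves the equations
with index at most `K` and vanishes beyond, which is a lower barrier for every nonnegative solution
with more coordinates. Let `d` be the difference of two such solutions and `M` a Lipschitz constant
of `f` on `[0, 1]`. Then `d_j ≤ 1` throughout, and `d_j' ≤ (λ * M + k) * sup_i d_i` wherever
`d_j > 0`; iterating the integrated inequality bounds `d_j` by the terms of a convergent exponential
series, so `d ≤ 0`. This one comparison gives monotonicity in `K` and uniqueness. The pointwise
limit of the uniformly Lipschitz functions `s^K` solves the full system by bounded convergence in
the integrated equations. -/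

section RateFunction

open Polynomial

theorem monotoneOn_eval_of_derivative_eval_nonneg {P : ℝ[X]} {a b : ℝ}
    (h : ∀ x ∈ Set.Ioo a b, 0 ≤ P.derivative.eval x) :
    MonotoneOn (fun x => P.eval x) (Set.Icc a b) := by
  refine monotoneOn_of_deriv_nonneg (convex_Icc a b) P.continuousOn
    P.differentiable.differentiableOn ?_
  rw [interior_Icc]
  intro x hx
  simpa only [Polynomial.deriv] using h x hx

theorem choose_mul_choose_mul_mul_eq (p n i : ℕ) :
    (p + n + 2).choose (p + i + 2) * (p + i).choose i * ((p + i + 2) * (p + i + 1)) =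
      (p + n + 2) * (p + n + 1) * (p + n).choose p * n.choose i := by
  have absorb_two := Nat.add_one_mul_choose_eq (p + n + 1) (p + i + 1)
  have absorb_one := Nat.add_one_mul_choose_eq (p + n) (p + i)
  have trinomial : (p + n).choose (p + i) * (p + i).choose i = (p + n).choose p * n.choose i := by
    simpa [Nat.choose_symm_add (a := p) (b := i)] using
      Nat.choose_mul (n := p + n) (Nat.le_add_right p i)
  linear_combination (p + n + 2) * (p + n + 1) * trinomial
    - (p + i).choose i * (p + i + 1) * absorb_two - (p + n + 2) * (p + i).choose i * absorb_one

/-- The polynomial `f^{(L,k)}` for `k < L`, with `k = n + 1` and `L = p + n + 2` so that no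
truncated subtraction is left. -/
noncomputable def ratePoly (p n : ℕ) : ℝ[X] :=
  ∑ i ∈ Finset.range (n + 1),
    C (((p + n + 2).choose (p + i + 2) * (p + i).choose i : ℕ) * (-1 : ℝ) ^ i) * X ^ (p + i + 2)

theorem fLk_eq_eval_ratePoly (p n : ℕ) (x : ℝ) :
    fLk (p + n + 2) (n + 1) x = (ratePoly p n).eval x := by
  rw [fLk, ← Finset.Ico_succ_right_eq_Icc, Finset.sum_Ico_eq_sum_range, ratePoly, eval_finsetSum]
  refine Finset.sum_congr rfl fun i _ => ?_
  have degree_eq : p + n + 2 - (n + 1) + (1 + i) = p + i + 2 := by omega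
  rw [degree_eq]
  simp

theorem derivative_derivative_ratePoly (p n : ℕ) :
    derivative (derivative (ratePoly p n)) =
      C (((p + n + 2) * (p + n + 1) * (p + n).choose p : ℕ) : ℝ) * X ^ p * (1 - X) ^ n := by
  rw [sub_eq_neg_add, add_pow, Finset.mul_sum, ratePoly, derivative_sum, derivative_sum]
  refine Finset.sum_congr rfl fun i _ => ?_
  have coeff_eq := congrArg (Nat.cast : ℕ → ℝ[X]) (choose_mul_choose_mul_mul_eq p n i)
  rw [derivative_C_mul_X_pow, derivative_C_mul_X_pow, show p + i + 2 - 1 = p + i + 1 from rfl,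
    Nat.add_sub_cancel]
  simp only [map_mul, map_pow, map_neg, map_one, map_natCast]
  push_cast at coeff_eq ⊢
  rw [neg_pow (X : ℝ[X]) i, one_pow, pow_add]
  linear_combination ((-1) ^ i * X ^ p * X ^ i) * coeff_eq

theorem monotoneOn_eval_ratePoly (p n : ℕ) :
    MonotoneOn (fun x => (ratePoly p n).eval x) (Set.Icc 0 1) := by
  have derivative_monotone :
      MonotoneOn (fun x => (derivative (ratePoly p n)).eval x) (Set.Icc 0 1) := by
    refine monotoneOn_eval_of_derivative_eval_nonneg fun x hx => ?_
    have hx₀ : 0 ≤ x := hx.1.le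
    have hx₁ : 0 ≤ 1 - x := sub_nonneg.2 hx.2.le
    rw [derivative_derivative_ratePoly]
    simp only [eval_mul, eval_C, eval_pow, eval_X, eval_sub, eval_one]
    positivity
  have derivative_eval_zero : (derivative (ratePoly p n)).eval 0 = 0 := by
    simp [ratePoly, eval_finsetSum]
  refine monotoneOn_eval_of_derivative_eval_nonneg fun x hx => ?_
  rw [← derivative_eval_zero]
  exact derivative_monotone (by simp) (Set.Ioo_subset_Icc_self hx) hx.1.le

theorem fLk_self {k : ℕ} (hk : 1 ≤ k) (x : ℝ) : fLk k k x = k * x := by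
  rw [fLk, Finset.sum_eq_single_of_mem 1 (by simpa using hk)]
  · simp
  · intro i hi hi₁
    have choose_eq_zero : (k - k + i - 2).choose (i - 1) = 0 :=
      Nat.choose_eq_zero_of_lt (by grind)
    rw [choose_eq_zero]
    simp

theorem monotoneOn_fLk {L k : ℕ} (hk : 1 ≤ k) (hkL : k ≤ L) :
    MonotoneOn (fLk L k) (Set.Icc 0 1) := by
  rcases hkL.eq_or_lt with rfl | hkL
  · intro x _ y _ hxy
    rw [fLk_self hk, fLk_self hk]
    gcongr
  · obtain ⟨n, rfl⟩ := Nat.exists_eq_add_of_le' hk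
    obtain ⟨p, rfl⟩ : ∃ p, L = p + n + 2 := ⟨L - (n + 2), by omega⟩
    exact (monotoneOn_eval_ratePoly p n).congr fun x _ => (fLk_eq_eval_ratePoly p n x).symm

theorem exists_lipschitzOnWith_fLk (L k : ℕ) :
    ∃ M, LipschitzOnWith M (fLk L k) (Set.Icc 0 1) := by
  have contDiff_fLk : ContDiff ℝ 1 (fLk L k) := by
    unfold fLk
    fun_prop
  exact contDiff_fLk.contDiffOn.exists_lipschitzOnWith one_ne_zero (convex_Icc 0 1) isCompact_Icc

end RateFunction

section DerivativeEstimates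

open Topology

theorem image_le_of_deriv_right_le_deriv_boundary_of_lt {f f' B B' : ℝ → ℝ} {a b : ℝ}
    (hf : ContinuousOn f (Set.Icc a b))
    (hf' : ∀ t ∈ Set.Ico a b, HasDerivWithinAt f (f' t) (Set.Ici t) t)
    (ha : f a ≤ B a) (hB : ContinuousOn B (Set.Icc a b))
    (hB' : ∀ t ∈ Set.Ico a b, HasDerivWithinAt B (B' t) (Set.Ici t) t)
    (bound : ∀ t ∈ Set.Ico a b, B t < f t → f' t ≤ B' t) ⦃t : ℝ⦄ (ht : t ∈ Set.Icc a b) :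
    f t ≤ B t := by
  refine le_of_forall_pos_le_add fun ε hε => ?_
  have weight_pos : ∀ τ ∈ Set.Icc a b, 0 < τ - a + 1 := fun τ hτ => by linarith [hτ.1]
  set r := ε / (t - a + 1)
  have hr : 0 < r := div_pos hε (weight_pos t ht)
  -- The tilted bound `B τ + r * (τ - a + 1)` lies strictly above `B` and grows strictly faster.
  have le_tilted : f t ≤ B t + r * (t - a + 1) := by
    refine image_le_of_deriv_right_lt_deriv_boundary' (B := fun τ => B τ + r * (τ - a + 1))
      (B' := fun τ => B' τ + r) hf hf' (by simpa using by linarith) (by fun_prop)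
      (fun τ hτ => ?_) (fun τ hτ contact => ?_) ht
    · have tilt := (((hasDerivAt_id τ).sub_const a).add_const 1).const_mul r
      simpa using (hB' τ hτ).fun_add tilt.hasDerivWithinAt
    · have : 0 < r * (τ - a + 1) := mul_pos hr (weight_pos τ (Set.Ico_subset_Icc_self hτ))
      linarith [bound τ hτ (by linarith)]
  rwa [div_mul_cancel₀ ε (weight_pos t ht).ne'] at le_tilted

theorem hasDerivAt_mul_pow_div_factorial (C t : ℝ) (n : ℕ) :
    HasDerivAt (fun τ => (C * τ) ^ (n + 1) / (n + 1).factorial)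
      (C * ((C * t) ^ n / n.factorial)) t := by
  refine ((((hasDerivAt_id' t).const_mul C).fun_pow (n + 1)).div_const
    ((n + 1).factorial : ℝ)).congr_deriv ?_
  have : (n.factorial : ℝ) ≠ 0 := by positivity
  have : (n + 1 : ℝ) ≠ 0 := by positivity
  rw [Nat.factorial_succ, Nat.add_sub_cancel]
  push_cast
  field_simp

theorem nonpos_of_hasDerivWithinAt_le_mul {ι : Type*} {S : Set ι} {d d' : ι → ℝ → ℝ} {A C : ℝ}
    (hC : 0 ≤ C) (hA : ∀ i ∈ S, ∀ t ∈ Set.Ici (0 : ℝ), d i t ≤ A) (h₀ : ∀ i ∈ S, d i 0 ≤ 0)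
    (hd : ∀ i ∈ S, ∀ t ∈ Set.Ici (0 : ℝ), HasDerivWithinAt (d i) (d' i t) (Set.Ici 0) t)
    (hd' : ∀ i ∈ S, ∀ t ∈ Set.Ici (0 : ℝ), 0 < d i t →
      ∀ δ, (∀ j ∈ S, d j t ≤ δ) → d' i t ≤ C * δ)
    {i : ι} (hi : i ∈ S) {t : ℝ} (ht : t ∈ Set.Ici (0 : ℝ)) : d i t ≤ 0 := by
  -- Picard iteration of the integral inequality improves the a priori bound `A` to the `n`-th
  -- term of the exponential series.
  have iterated_bound (n : ℕ) :
      ∀ j ∈ S, ∀ τ ∈ Set.Ici (0 : ℝ), d j τ ≤ |A| * ((C * τ) ^ n / n.factorial) := by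
    induction n with
    | zero => exact fun j hj τ hτ => by simpa using (hA j hj τ hτ).trans (le_abs_self A)
    | succ n ih =>
      intro j hj T hT
      have hB (τ : ℝ) := (hasDerivAt_mul_pow_div_factorial C τ n).const_mul |A|
      refine image_le_of_deriv_right_le_deriv_boundary_of_lt (a := 0) (b := T)
        (fun τ hτ => (hd j hj τ hτ.1).continuousWithinAt.mono Set.Icc_subset_Ici_self)
        (fun τ hτ => (hd j hj τ hτ.1).mono (Set.Ici_subset_Ici.2 hτ.1)) (by simpa using h₀ j hj)
        (fun τ _ => (hB τ).continuousAt.continuousWithinAt) (fun τ _ => (hB τ).hasDerivWithinAt)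
        (fun τ hτ hlt => ?_) ⟨hT, le_rfl⟩
      have : 0 ≤ τ := hτ.1
      have d_pos : 0 < d j τ := lt_of_le_of_lt (by positivity) hlt
      exact (hd' j hj τ hτ.1 d_pos _ fun i hi => ih i hi τ hτ.1).trans_eq (by ring)
  have terms_tendsto_zero :
      Tendsto (fun n : ℕ => |A| * ((C * t) ^ n / n.factorial)) atTop (𝓝 0) := by
    simpa using (FloorSemiring.tendsto_pow_div_factorial_atTop (C * t)).const_mul |A|
  exact ge_of_tendsto' terms_tendsto_zero fun n => iterated_bound n i hi t ht

variable {E : Type*} [NormedAddCommGroup E] [NormedSpace ℝ E] [CompleteSpace E]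

theorem hasDerivWithinAt_Ici_integral {f : ℝ → E} {a t : ℝ} (hf : ContinuousOn f (Set.Ici a))
    (ht : t ∈ Set.Ici a) :
    HasDerivWithinAt (fun u => ∫ τ in a..u, f τ) (f t) (Set.Ici a) t := by
  have extension_continuous : Continuous fun τ => f (max τ a) :=
    hf.comp_continuous (by fun_prop) fun τ => le_max_right τ a
  have extension_eq {τ : ℝ} (hτ : τ ∈ Set.Ici a) : f (max τ a) = f τ := by rw [max_eq_left hτ]
  have integral_eq : ∀ u ∈ Set.Ici a, ∫ τ in a..u, f τ = ∫ τ in a..u, f (max τ a) := by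
    refine fun u hu => intervalIntegral.integral_congr fun τ hτ => (extension_eq ?_).symm
    exact (Set.uIcc_of_le (Set.mem_Ici.1 hu) ▸ hτ).1
  have h := (extension_continuous.integral_hasStrictDerivAt a t).hasDerivAt
  rw [extension_eq ht] at h
  exact h.hasDerivWithinAt.congr integral_eq (integral_eq t ht)

theorem hasDerivWithinAt_Ici_of_tendsto {ι : Type*} {l : Filter ι} [l.NeBot]
    [l.IsCountablyGenerated] {f f' : ι → ℝ → E} {g g' : ℝ → E} {a C t : ℝ}
    (hf : ∀ᶠ n in l, ∀ τ ∈ Set.Ici a, HasDerivWithinAt (f n) (f' n τ) (Set.Ici a) τ)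
    (hf' : ∀ᶠ n in l, ContinuousOn (f' n) (Set.Ici a))
    (hC : ∀ᶠ n in l, ∀ τ ∈ Set.Ici a, ‖f' n τ‖ ≤ C)
    (hg' : ContinuousOn g' (Set.Ici a))
    (hlim : ∀ τ ∈ Set.Ici a, Tendsto (fun n => f n τ) l (𝓝 (g τ)))
    (hlim' : ∀ τ ∈ Set.Ici a, Tendsto (fun n => f' n τ) l (𝓝 (g' τ))) (ht : t ∈ Set.Ici a) :
    HasDerivWithinAt g (g' t) (Set.Ici a) t := by
  have integral_eq_sub : ∀ u ∈ Set.Ici a, ∫ τ in a..u, g' τ = g u - g a := by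
    intro u hu
    have mem_Ici {τ : ℝ} (hτ : τ ∈ Set.uIoc a u) : τ ∈ Set.Ici a :=
      (Set.uIoc_of_le (Set.mem_Ici.1 hu) ▸ hτ).1.le
    have integral_tendsto :
        Tendsto (fun n => ∫ τ in a..u, f' n τ) l (𝓝 (∫ τ in a..u, g' τ)) := by
      refine intervalIntegral.tendsto_integral_filter_of_dominated_convergence (fun _ => C)
        (hf'.mono fun n hn => ?_) (hC.mono fun n hn => .of_forall fun τ hτ => hn τ (mem_Ici hτ))
        intervalIntegrable_const (.of_forall fun τ hτ => hlim' τ (mem_Ici hτ))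
      exact (hn.mono fun τ => mem_Ici).aestronglyMeasurable measurableSet_uIoc
    refine tendsto_nhds_unique (integral_tendsto.congr' ?_)
      ((hlim u hu).sub (hlim a Set.self_mem_Ici))
    filter_upwards [hf, hf'] with n hn hn'
    exact intervalIntegral.integral_eq_sub_of_hasDeriv_right_of_le hu
      (fun τ hτ => (hn τ hτ.1).continuousWithinAt.mono Set.Icc_subset_Ici_self)
      (fun τ hτ => (hn τ hτ.1.le).mono (Set.Ioi_subset_Ici hτ.1.le))
      ((hn'.mono Set.Icc_subset_Ici_self).intervalIntegrable_of_Icc hu)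
  have eq_add_integral : ∀ u ∈ Set.Ici a, g u = g a + ∫ τ in a..u, g' τ :=
    fun u hu => by rw [integral_eq_sub u hu, add_sub_cancel]
  exact ((hasDerivWithinAt_Ici_integral hg' ht).const_add (g a)).congr eq_add_integral
    (eq_add_integral t ht)

end DerivativeEstimates

theorem InUbar.mem_Icc {x : ℕ → ℝ} (hx : InUbar x) : x ∈ Set.Icc 0 1 :=
  ⟨hx.2.2, fun j => (antitone_nat_of_succ_le hx.2.1 j.zero_le).trans_eq hx.1⟩

theorem isClosed_setOf_inUbar : IsClosed {x | InUbar x} := by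
  simp only [InUbar, Set.ofPred_and, Set.ofPred_forall]
  refine (isClosed_eq (by fun_prop) (by fun_prop)).inter (.inter ?_ ?_)
  · exact isClosed_iInter fun j => isClosed_le (by fun_prop) (by fun_prop)
  · exact isClosed_iInter fun j => isClosed_le (by fun_prop) (by fun_prop)

theorem sub_le_mul_of_monotoneOn_of_lipschitzOnWith {F : ℝ → ℝ} {M : NNReal} {s : Set ℝ}
    (hmono : MonotoneOn F s) (hF : LipschitzOnWith M F s) {a b δ : ℝ} (ha : a ∈ s) (hb : b ∈ s)
    (hδ : 0 ≤ δ) (hab : a - b ≤ δ) : F a - F b ≤ M * δ := by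
  rcases le_total a b with h | h
  · exact (sub_nonpos.2 (hmono ha hb h)).trans (by positivity)
  · calc F a - F b ≤ ‖F a - F b‖ := le_abs_self _
      _ ≤ M * ‖a - b‖ := hF.norm_sub_le ha hb
      _ ≤ M * δ := by rw [Real.norm_of_nonneg (sub_nonneg.2 h)]; gcongr

section MeanFieldSystem

open Topology

/-- The right-hand side of the `j`-th mean-field equation, for a general arrival rate function `F`
in place of `f^{(L,k)}` and a real service rate `κ` in place of `k`. -/
def drift (F : ℝ → ℝ) (lam κ : ℝ) (x : ℕ → ℝ) (j : ℕ) : ℝ :=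
  lam * (F (x (j - 1)) - F (x j)) - κ * (x j - x (j + 1))

/-- A `Ū`-valued solution of the mean-field equations with indices in `S`, started from `g`, whose
positive coordinates outside `S` vanish. Thus `S = {1, …, K}` is the truncated system with boundary
value `0`, its solutions being extended by zero beyond `K`, and `S = {1, 2, …}` is the full
mean-field system. -/
structure IsUbarSol (F : ℝ → ℝ) (lam κ : ℝ) (S : Set ℕ) (g : ℕ → ℝ) (x : ℝ → ℕ → ℝ) : Prop where
  init : ∀ j ∈ S, x 0 j = g j
  inUbar : ∀ t ∈ Set.Ici (0 : ℝ), InUbar (x t)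
  eq_zero : ∀ j ∉ S, j ≠ 0 → ∀ t ∈ Set.Ici (0 : ℝ), x t j = 0
  hasDerivWithinAt : ∀ j ∈ S, ∀ t ∈ Set.Ici (0 : ℝ),
    HasDerivWithinAt (fun τ => x τ j) (drift F lam κ (x t) j) (Set.Ici 0) t

variable {F : ℝ → ℝ} {M : NNReal} {lam κ : ℝ}

theorem continuousOn_drift (hF : ContinuousOn F (Set.Icc 0 1)) (j : ℕ) :
    ContinuousOn (fun x => drift F lam κ x j) (Set.Icc 0 1) := by
  have hF' (i : ℕ) : ContinuousOn (fun x : ℕ → ℝ => F (x i)) (Set.Icc 0 1) :=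
    hF.comp (continuous_apply i).continuousOn fun x hx => ⟨hx.1 i, hx.2 i⟩
  exact (((hF' (j - 1)).sub (hF' j)).const_mul lam).sub (by fun_prop)

theorem norm_drift_le (hF : LipschitzOnWith M F (Set.Icc 0 1)) {x : ℕ → ℝ}
    (hx : x ∈ Set.Icc 0 1) (j : ℕ) : ‖drift F lam κ x j‖ ≤ |lam| * M + |κ| := by
  have hx' (i : ℕ) : x i ∈ Set.Icc (0 : ℝ) 1 := ⟨hx.1 i, hx.2 i⟩
  have norm_sub_le_one (i i' : ℕ) : ‖x i - x i'‖ ≤ 1 := Real.dist_le_of_mem_Icc_01 (hx' i) (hx' i')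
  calc ‖drift F lam κ x j‖
      ≤ |lam| * ‖F (x (j - 1)) - F (x j)‖ + |κ| * ‖x j - x (j + 1)‖ := by
        simpa only [drift, norm_mul, Real.norm_eq_abs] using
          norm_sub_le (lam * (F (x (j - 1)) - F (x j))) (κ * (x j - x (j + 1)))
    _ ≤ |lam| * (M * ‖x (j - 1) - x j‖) + |κ| * ‖x j - x (j + 1)‖ := by
        gcongr
        exact hF.norm_sub_le (hx' _) (hx' _)
    _ ≤ |lam| * (M * 1) + |κ| * 1 := by
        gcongr <;> exact norm_sub_le_one _ _
    _ = |lam| * M + |κ| := by ring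

theorem drift_sub_drift_le (hmono : MonotoneOn F (Set.Icc 0 1))
    (hF : LipschitzOnWith M F (Set.Icc 0 1)) (hlam : 0 ≤ lam) (hκ : 0 ≤ κ) {x y : ℕ → ℝ}
    (hx : x ∈ Set.Icc 0 1) (hy : y ∈ Set.Icc 0 1) {j : ℕ} (hj : y j ≤ x j) {δ : ℝ}
    (hδ : ∀ i, x i - y i ≤ δ) :
    drift F lam κ x j - drift F lam κ y j ≤ (lam * M + κ) * δ := by
  have hx' (i : ℕ) : x i ∈ Set.Icc (0 : ℝ) 1 := ⟨hx.1 i, hx.2 i⟩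
  have hy' (i : ℕ) : y i ∈ Set.Icc (0 : ℝ) 1 := ⟨hy.1 i, hy.2 i⟩
  have inflow_le : F (x (j - 1)) - F (y (j - 1)) ≤ M * δ :=
    sub_le_mul_of_monotoneOn_of_lipschitzOnWith hmono hF (hx' _) (hy' _)
      ((sub_nonneg.2 hj).trans (hδ j)) (hδ _)
  have outflow_nonneg : 0 ≤ F (x j) - F (y j) := sub_nonneg.2 (hmono (hy' j) (hx' j) hj)
  calc drift F lam κ x j - drift F lam κ y j
      = lam * (F (x (j - 1)) - F (y (j - 1)) - (F (x j) - F (y j)))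
        + κ * ((x (j + 1) - y (j + 1)) - (x j - y j)) := by unfold drift; ring
    _ ≤ lam * (M * δ) + κ * δ := by
        gcongr
        · linarith
        · linarith [hδ (j + 1)]
    _ = (lam * M + κ) * δ := by ring

namespace IsUbarSol

variable {S S' : Set ℕ} {g g' : ℕ → ℝ} {x y : ℝ → ℕ → ℝ}

theorem lipschitzOnWith (hF : LipschitzOnWith M F (Set.Icc 0 1)) (hx : IsUbarSol F lam κ S g x)
    (j : ℕ) : LipschitzOnWith (‖lam‖₊ * M + ‖κ‖₊) (fun t => x t j) (Set.Ici 0) := by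
  by_cases hj : j ∈ S
  · refine (convex_Ici 0).lipschitzOnWith_of_nnnorm_hasDerivWithin_le (hx.hasDerivWithinAt j hj) ?_
    exact fun t ht => norm_drift_le hF (hx.inUbar t ht).mem_Icc j
  · obtain ⟨c, hc⟩ : ∃ c, ∀ t ∈ Set.Ici 0, x t j = c := by
      rcases eq_or_ne j 0 with rfl | hj₀
      · exact ⟨1, fun t ht => (hx.inUbar t ht).1⟩
      · exact ⟨0, hx.eq_zero j hj hj₀⟩
    exact LipschitzOnWith.of_dist_le_mul fun t ht t' ht' => by
      rw [hc t ht, hc t' ht', dist_self]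
      positivity

theorem continuousOn_drift (hF : LipschitzOnWith M F (Set.Icc 0 1))
    (hx : IsUbarSol F lam κ S g x) (j : ℕ) :
    ContinuousOn (fun t => drift F lam κ (x t) j) (Set.Ici 0) :=
  (_root_.continuousOn_drift hF.continuousOn j).comp
    (continuousOn_pi.2 fun i => (hx.lipschitzOnWith hF i).continuousOn)
    fun t ht => (hx.inUbar t ht).mem_Icc

theorem le (hmono : MonotoneOn F (Set.Icc 0 1)) (hF : LipschitzOnWith M F (Set.Icc 0 1))
    (hlam : 0 ≤ lam) (hκ : 0 ≤ κ) (hx : IsUbarSol F lam κ S g x) (hy : IsUbarSol F lam κ S' g' y)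
    (hS : S ⊆ S') (hg : ∀ j ∈ S, g j ≤ g' j) {t : ℝ} (ht : t ∈ Set.Ici (0 : ℝ)) :
    x t ≤ y t := by
  have hx' {τ : ℝ} (hτ : τ ∈ Set.Ici (0 : ℝ)) := (hx.inUbar τ hτ).mem_Icc
  have hy' {τ : ℝ} (hτ : τ ∈ Set.Ici (0 : ℝ)) := (hy.inUbar τ hτ).mem_Icc
  have le_off_S {τ : ℝ} (hτ : τ ∈ Set.Ici (0 : ℝ)) {j : ℕ} (hj : j ∉ S) : x τ j ≤ y τ j := by
    rcases eq_or_ne j 0 with rfl | hj₀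
    · rw [(hx.inUbar τ hτ).1, (hy.inUbar τ hτ).1]
    · exact (hx.eq_zero j hj hj₀ τ hτ).trans_le ((hy' hτ).1 j)
  intro j
  rcases em' (j ∈ S) with hj | hj
  · exact le_off_S ht hj
  refine sub_nonpos.1 (nonpos_of_hasDerivWithinAt_le_mul (d := fun i τ => x τ i - y τ i)
    (A := 1) (C := lam * M + κ) (by positivity) (fun i _ τ hτ => ?_) (fun i hi => ?_)
    (fun i hi τ hτ => (hx.hasDerivWithinAt i hi τ hτ).sub (hy.hasDerivWithinAt i (hS hi) τ hτ))
    (fun i hi τ hτ d_pos δ hδ => ?_) hj ht)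
  · exact (sub_le_self _ ((hy' hτ).1 i)).trans ((hx' hτ).2 i)
  · simpa [hx.init i hi, hy.init i (hS hi)] using hg i hi
  · refine drift_sub_drift_le hmono hF hlam hκ (hx' hτ) (hy' hτ) (sub_pos.1 d_pos).le fun l => ?_
    by_cases hl : l ∈ S
    · exact hδ l hl
    · exact (sub_nonpos.2 (le_off_S hτ hl)).trans (d_pos.le.trans (hδ i hi))

theorem of_tendsto {ι : Type*} [SemilatticeSup ι] [Nonempty ι]
    [(atTop : Filter ι).IsCountablyGenerated] {S : ι → Set ℕ} {x : ι → ℝ → ℕ → ℝ}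
    {u : ℝ → ℕ → ℝ} (hF : LipschitzOnWith M F (Set.Icc 0 1)) (hS : Monotone S)
    (hx : ∀ n, IsUbarSol F lam κ (S n) g (x n))
    (hu : ∀ t ∈ Set.Ici (0 : ℝ), Tendsto (fun n => x n t) atTop (𝓝 (u t))) :
    IsUbarSol F lam κ (⋃ n, S n) g u := by
  have u_inUbar : ∀ t ∈ Set.Ici (0 : ℝ), InUbar (u t) := fun t ht =>
    isClosed_setOf_inUbar.mem_of_tendsto (hu t ht) (.of_forall fun n => (hx n).inUbar t ht)
  have u_continuousOn : ContinuousOn u (Set.Ici 0) := continuousOn_pi.2 fun i =>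
    Tendsto.continuousOn_of_equicontinuousOn (fun t ht => tendsto_pi_nhds.1 (hu t ht) i)
      (LipschitzOnWith.uniformEquicontinuousOn _ _
        fun n => (hx n).lipschitzOnWith hF i).equicontinuousOn
  have eventually_mem : ∀ j ∈ ⋃ n, S n, ∀ᶠ n in atTop, j ∈ S n := fun j hj =>
    let ⟨n, hn⟩ := Set.mem_iUnion.1 hj
    (eventually_ge_atTop n).mono fun m hm => hS hm hn
  refine ⟨fun j hj => ?_, u_inUbar, fun j hj hj₀ t ht => ?_, fun j hj t ht => ?_⟩
  · refine tendsto_nhds_unique (tendsto_pi_nhds.1 (hu 0 Set.self_mem_Ici) j)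
      (tendsto_const_nhds.congr' ?_)
    exact (eventually_mem j hj).mono fun n hn => ((hx n).init j hn).symm
  · refine tendsto_nhds_unique (tendsto_pi_nhds.1 (hu t ht) j) (tendsto_const_nhds.congr ?_)
    exact fun n => ((hx n).eq_zero j (fun hn => hj (Set.mem_iUnion_of_mem n hn)) hj₀ t ht).symm
  · have drift_continuousOn := _root_.continuousOn_drift (lam := lam) (κ := κ) hF.continuousOn j
    refine hasDerivWithinAt_Ici_of_tendsto (l := atTop)
      ((eventually_mem j hj).mono fun n hn => (hx n).hasDerivWithinAt j hn)
      (.of_forall fun n => (hx n).continuousOn_drift hF j)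
      (.of_forall fun n τ hτ => norm_drift_le hF ((hx n).inUbar τ hτ).mem_Icc j)
      (drift_continuousOn.comp u_continuousOn fun τ hτ => (u_inUbar τ hτ).mem_Icc)
      (fun τ hτ => tendsto_pi_nhds.1 (hu τ hτ) j) (fun τ hτ => ?_) ht
    refine (drift_continuousOn (u τ) (u_inUbar τ hτ).mem_Icc).tendsto.comp
      (tendsto_nhdsWithin_iff.2 ⟨hu τ hτ, .of_forall fun n => ((hx n).inUbar τ hτ).mem_Icc⟩)

theorem exists_tendsto {ι : Type*} [SemilatticeSup ι] [Nonempty ι]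
    [(atTop : Filter ι).IsCountablyGenerated] {S : ι → Set ℕ} {x : ι → ℝ → ℕ → ℝ}
    (hmono : MonotoneOn F (Set.Icc 0 1)) (hF : LipschitzOnWith M F (Set.Icc 0 1))
    (hlam : 0 ≤ lam) (hκ : 0 ≤ κ) (hS : Monotone S) (hx : ∀ n, IsUbarSol F lam κ (S n) g (x n)) :
    ∃ u, IsUbarSol F lam κ (⋃ n, S n) g u ∧
      ∀ t ∈ Set.Ici (0 : ℝ), Tendsto (fun n => x n t) atTop (𝓝 (u t)) := by
  let u : ℝ → ℕ → ℝ := fun t j => ⨆ n, x n t j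
  have x_tendsto : ∀ t ∈ Set.Ici (0 : ℝ), Tendsto (fun n => x n t) atTop (𝓝 (u t)) := by
    refine fun t ht => tendsto_pi_nhds.2 fun j => tendsto_atTop_ciSup ?_ ?_
    · exact fun n m hnm => (hx n).le hmono hF hlam hκ (hx m) (hS hnm) (fun _ _ => le_rfl) ht j
    · exact ⟨1, Set.forall_mem_range.2 fun n => ((hx n).inUbar t ht).mem_Icc.2 j⟩
  refine ⟨u, of_tendsto hF hS hx x_tendsto, x_tendsto⟩

end IsUbarSol

end MeanFieldSystem

section ZeroExtension

theorem indicator_Iic_apply_of_le_succ {x : ℕ → ℝ} {K i : ℕ} (hend : x (K + 1) = 0)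
    (hi : i ≤ K + 1) : (Set.Iic K).indicator x i = x i := by
  rcases Nat.le_succ_iff.1 hi with hi | rfl
  · exact Set.indicator_of_mem (Set.mem_Iic.2 hi) x
  · rw [hend, Set.indicator_of_notMem (by simp)]

theorem inUbar_indicator_Iic {x : ℕ → ℝ} {K : ℕ} (h₀ : x 0 = 1) (hend : x (K + 1) = 0)
    (hord : ∀ j ≤ K, x (j + 1) ≤ x j) : InUbar ((Set.Iic K).indicator x) := by
  have nonneg : ∀ j ≤ K + 1, 0 ≤ x j := fun j hj =>
    Nat.decreasingInduction (motive := fun i _ => 0 ≤ x i)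
      (fun i hi ih => ih.trans (hord i (Nat.lt_succ_iff.1 hi))) hend.ge hj
  refine ⟨by simpa using h₀, fun j => ?_,
    fun j => Set.indicator_apply_nonneg fun hj => nonneg j (Nat.le_succ_of_le hj)⟩
  rcases le_or_gt j K with hj | hj
  · rw [indicator_Iic_apply_of_le_succ hend (Nat.succ_le_succ hj),
      indicator_Iic_apply_of_le_succ hend (hj.trans K.le_succ)]
    exact hord j hj
  · rw [Set.indicator_of_notMem (by simp; omega), Set.indicator_of_notMem (by simpa using hj)]

theorem IsTruncSol.isUbarSol_indicator {L k K : ℕ} {lam : ℝ} {s : ℝ → ℕ → ℝ} {g : ℕ → ℝ}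
    (hs : IsTruncSol L k lam K 0 s) (hinit : ∀ j, 1 ≤ j → j ≤ K → s 0 j = g j)
    (hord : ∀ t ∈ Set.Ici (0 : ℝ), ∀ j ≤ K, s t (j + 1) ≤ s t j) :
    IsUbarSol (fLk L k) lam k (Set.Icc 1 K) g (fun t => (Set.Iic K).indicator (s t)) where
  init j hj := (Set.indicator_of_mem (Set.mem_Iic.2 hj.2) _).trans (hinit j hj.1 hj.2)
  inUbar t ht := inUbar_indicator_Iic (hs.1 t ht) (hs.2.1 t ht) (hord t ht)
  eq_zero j hj hj₀ _ _ := Set.indicator_of_notMem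
    (fun hjK => hj ⟨Nat.one_le_iff_ne_zero.2 hj₀, Set.mem_Iic.1 hjK⟩) _
  hasDerivWithinAt j hj t ht := by
    have apply_eq {i : ℕ} (hi : i ≤ j + 1) : (Set.Iic K).indicator (s t) i = s t i :=
      indicator_Iic_apply_of_le_succ (hs.2.1 t ht) (hi.trans (Nat.succ_le_succ hj.2))
    simp only [drift, Set.indicator_of_mem (Set.mem_Iic.2 hj.2)]
    rw [apply_eq (by omega), apply_eq le_rfl]
    exact hs.2.2 j hj.1 hj.2 t ht

end ZeroExtension

theorem isMFSol_iff_isUbarSol {L k : ℕ} {lam : ℝ} {g : ℕ → ℝ} (hg : g 0 = 1) {u : ℝ → ℕ → ℝ} :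
    IsMFSol L k lam g u ↔ IsUbarSol (fLk L k) lam k (Set.Ici 1) g u := by
  refine ⟨fun hu => ⟨fun j _ => hu.1 j, hu.2.1, fun j hj hj₀ => ?_, hu.2.2⟩,
    fun hu => ⟨fun j => ?_, hu.inUbar, hu.hasDerivWithinAt⟩⟩
  · exact absurd (Nat.one_le_iff_ne_zero.2 hj₀) hj
  · rcases j.eq_zero_or_pos with rfl | hj
    · rw [(hu.inUbar 0 Set.self_mem_Ici).1, hg]
    · exact hu.init j hj

theorem truncSol_mono_and_tendsto_mfSol_general {F : ℝ → ℝ} {M : NNReal} {lam κ : ℝ}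
    (hmono : MonotoneOn F (Set.Icc 0 1)) (hF : LipschitzOnWith M F (Set.Icc 0 1))
    (hlam : 0 ≤ lam) (hκ : 0 ≤ κ) {g : ℕ → ℝ} {s : ℕ → ℝ → ℕ → ℝ}
    (hs : ∀ K, IsUbarSol F lam κ (Set.Icc 1 K) g (fun t => (Set.Iic K).indicator (s K t))) :
    (∀ j, 1 ≤ j → ∀ t ∈ Set.Ici (0 : ℝ), ∀ K K' : ℕ, j ≤ K → K ≤ K' →
        s K t j ≤ s K' t j) ∧
    ∃ u : ℝ → ℕ → ℝ, IsUbarSol F lam κ (Set.Ici 1) g u ∧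
      (∀ j, 1 ≤ j → ∀ t ∈ Set.Ici (0 : ℝ),
        Tendsto (fun K : ℕ => s K t j) atTop (nhds (u t j))) ∧
      (∀ u' : ℝ → ℕ → ℝ, IsUbarSol F lam κ (Set.Ici 1) g u' →
        ∀ t ∈ Set.Ici (0 : ℝ), ∀ j, u' t j = u t j) := by
  have indices_mono : Monotone fun K : ℕ => Set.Icc 1 K := fun _ _ => Set.Icc_subset_Icc_right
  obtain ⟨u, hu, hlim⟩ := IsUbarSol.exists_tendsto hmono hF hlam hκ indices_mono hs
  rw [Set.iUnion_Icc_right] at hu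
  refine ⟨fun j _ t ht K K' hjK hKK' => ?_, u, hu, fun j _ t ht => ?_, fun u' hu' t ht j => ?_⟩
  · have h := (hs K).le hmono hF hlam hκ (hs K') (indices_mono hKK') (fun _ _ => le_rfl) ht j
    rwa [Set.indicator_of_mem (Set.mem_Iic.2 hjK),
      Set.indicator_of_mem (Set.mem_Iic.2 (hjK.trans hKK'))] at h
  · refine (tendsto_pi_nhds.1 (hlim t ht) j).congr' ?_
    filter_upwards [eventually_ge_atTop j] with K hjK
    exact Set.indicator_of_mem (Set.mem_Iic.2 hjK) _
  · have le_of_isUbarSol {v w : ℝ → ℕ → ℝ} (hv : IsUbarSol F lam κ (Set.Ici 1) g v)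
        (hw : IsUbarSol F lam κ (Set.Ici 1) g w) : v t ≤ w t :=
      hv.le hmono hF hlam hκ hw subset_rfl (fun _ _ => le_rfl) ht
    exact congrFun ((le_of_isUbarSol hu' hu).antisymm (le_of_isUbarSol hu hu')) j

/-- Lemma 5.3 (ii): the solutions `s^K` of the truncated systems with
boundary value `0` and initial values `g_1,…,g_K`, ordered as in `Ū`, are nondecreasing
in `K` at each fixed coordinate `j` and time `t ≥ 0` (for `K ≥ j`), and they converge
as `K → ∞` to the unique `Ū`-valued solution of the mean-field ODE system. -/
theorem truncSol_mono_and_tendsto_mfSol (L k : ℕ) (hk : 1 ≤ k) (hkL : k ≤ L)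
    (lam : ℝ) (hlam : 0 < lam) (g : ℕ → ℝ) (hg : InUbar g)
    (s : ℕ → ℝ → ℕ → ℝ)
    (hsol : ∀ K : ℕ, IsTruncSol L k lam K 0 (s K))
    (hinit : ∀ K : ℕ, ∀ j, 1 ≤ j → j ≤ K → s K 0 j = g j)
    (hord : ∀ K : ℕ, ∀ t ∈ Set.Ici (0 : ℝ), ∀ j ≤ K, s K t (j + 1) ≤ s K t j) :
    (∀ j, 1 ≤ j → ∀ t ∈ Set.Ici (0 : ℝ), ∀ K K' : ℕ, j ≤ K → K ≤ K' →
        s K t j ≤ s K' t j) ∧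
    ∃ u : ℝ → ℕ → ℝ, IsMFSol L k lam g u ∧
      (∀ j, 1 ≤ j → ∀ t ∈ Set.Ici (0 : ℝ),
        Tendsto (fun K : ℕ => s K t j) atTop (nhds (u t j))) ∧
      (∀ u' : ℝ → ℕ → ℝ, IsMFSol L k lam g u' →
        ∀ t ∈ Set.Ici (0 : ℝ), ∀ j, u' t j = u t j) := by
  obtain ⟨M, hM⟩ := exists_lipschitzOnWith_fLk L k
  simpa only [isMFSol_iff_isUbarSol hg.1] using truncSol_mono_and_tendsto_mfSol_general
    (monotoneOn_fLk hk hkL) hM hlam.le k.cast_nonneg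
    fun K => (hsol K).isUbarSol_indicator (hinit K) (hord K)
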